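/- Let d ≥ 2 be an integer, fix k with 2 ≤ k ≤ d, and fix positive reals e_j > 0 for each j ∈ {2,…,d} with j ≠ k. For a complex number z with Im z > 0, define Ψ(z) = ∫₀^∞ [ 1 − τ^d / ( τ^d + τ^{d−1} + Σ_{j∈{2,…,d}, j≠k} e_j τ^{d−j} + z·τ^{d−k} ) − 1/(τ+1) ] dτ, the integral being over τ ∈ (0,∞). Then Im Ψ(z) > 0. (That is, the subentropy Q(1,e₂,…,e_d) is a Pick function of each variable e_k separately: its analytic continuation maps the upper half-plane into itself.) -/

import Mathlib

open MeasureTheory Real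

/-!
In the variable `s = 1/τ` the integrand is `1/(1 + s) - 1/q(s)`, where `q(s) = ∑ⱼ eⱼ sʲ` with
`e₀ = e₁ = 1`. Writing `q(s) = 1 + s + s² r(s)`, this difference equals `s² r(s) / ((1 + s) q(s))`,
and the factor `s²` cancels the Jacobian of `τ ↦ 1/τ`.

As soon as every `eⱼ` with `j ≥ 2` lies in the closed upper half-plane and one of them in the open
one, `Im r > 0` on `(0, ∞)`. Hence `Im q = s² Im r > 0` there; as also `q(0) = 1`, the polynomial
`q` has no zero on `[0, ∞)` and the integral converges. Finally `Im (-1/q) = Im q / |q|² > 0`, so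
that the integrand has positive imaginary part everywhere.
-/

section Integral

open Asymptotics Filter Set

theorem im_setIntegral_pos {α : Type*} [MeasurableSpace α] {μ : Measure α} {S : Set α} {f : α → ℂ}
    (hS : MeasurableSet S) (hμS : μ S ≠ 0) (hf : IntegrableOn f S μ)
    (hpos : ∀ x ∈ S, 0 < (f x).im) : 0 < (∫ x in S, f x ∂μ).im := by
  have him : ∫ x in S, (f x).im ∂μ = (∫ x in S, f x ∂μ).im := integral_im hf
  have hnonneg : 0 ≤ᵐ[μ.restrict S] fun x ↦ (f x).im :=
    ae_restrict_of_forall_mem hS fun x hx ↦ (hpos x hx).le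
  rw [← him, setIntegral_pos_iff_support_of_nonneg_ae hnonneg hf.im]
  exact (pos_iff_ne_zero.2 hμS).trans_le (measure_mono fun x hx ↦ ⟨(hpos x hx).ne', hx⟩)

theorem integrableOn_Ioi_sq_smul_comp_inv {E : Type*} [NormedAddCommGroup E] [NormedSpace ℝ E]
    {g : ℝ → E} (hg : ContinuousOn g (Ici 0))
    (hbdd : (fun s ↦ s ^ 2 • g s) =O[atTop] fun _ ↦ (1 : ℝ)) :
    IntegrableOn (fun t ↦ t⁻¹ ^ 2 • g t⁻¹) (Ioi 0) := by
  have hdecay : g =O[atTop] fun s : ℝ ↦ s ^ (-2 : ℝ) := by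
    have hmul := (isBigO_refl (fun s : ℝ ↦ s ^ (-2 : ℝ)) atTop).smul hbdd
    refine hmul.congr' ?_ (by simp)
    filter_upwards [eventually_gt_atTop 0] with s hs
    rw [smul_smul, ← rpow_natCast, ← rpow_add hs]
    norm_num
  have hint : IntegrableOn g (Ioi 0) :=
    ((hg.locallyIntegrableOn measurableSet_Ici).integrableOn_of_isBigO_atTop hdecay
      (integrableAtFilter_rpow_atTop_iff.2 (by norm_num))).mono_set Ioi_subset_Ici_self
  have hcomp := (integrableOn_Ioi_comp_rpow_iff' g (p := -1) (by norm_num)).2 hint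
  refine hcomp.congr_fun (fun t ht ↦ ?_) measurableSet_Ioi
  have hpow : t ^ (-1 - 1 : ℝ) = t⁻¹ ^ 2 := by
    rw [← rpow_natCast, ← rpow_neg_one, ← rpow_mul (le_of_lt ht)]
    norm_num
  simp only [hpow, rpow_neg_one]

end Integral

theorem inv_one_add_inv {K : Type*} [Field K] {a : K} (ha : a ≠ 0) (ha1 : a + 1 ≠ 0) :
    (1 + a⁻¹)⁻¹ = 1 - 1 / (a + 1) := by
  field_simp
  ring

section GeneratingFunction

open Asymptotics Filter Set

/-- The generating function `q(s) = 1 + s + s² r(s)` of elementary symmetric polynomials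
normalized by `e₀ = e₁ = 1`, as a function of its quadratic remainder `r`. -/
def esymmGen (r : ℝ → ℂ) (s : ℝ) : ℂ :=
  1 + s + s ^ 2 * r s

variable {r : ℝ → ℂ} {s : ℝ}

theorem im_esymmGen : (esymmGen r s).im = s ^ 2 * (r s).im := by
  simp [esymmGen, ← Complex.ofReal_pow]

theorem esymmGen_ne_zero (hr : ∀ x, 0 < x → 0 < (r x).im) (hs : 0 ≤ s) : esymmGen r s ≠ 0 := by
  rcases hs.eq_or_lt with rfl | hs
  · simp [esymmGen]
  · have him : 0 < (esymmGen r s).im := by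
      rw [im_esymmGen]
      exact mul_pos (pow_pos hs 2) (hr s hs)
    exact fun h ↦ him.ne' (by simp [h])

theorem one_add_ofReal_ne_zero (hs : 0 ≤ s) : (1 + s : ℂ) ≠ 0 := by
  exact_mod_cast (by positivity : 1 + s ≠ 0)

theorem norm_inv_one_add_ofReal_le_one (hs : 0 ≤ s) : ‖(1 + s : ℂ)⁻¹‖ ≤ 1 := by
  rw [norm_inv, ← Complex.ofReal_one, ← Complex.ofReal_add, Complex.norm_of_nonneg (by positivity)]
  exact inv_le_one_of_one_le₀ (by linarith)

theorem inv_one_add_sub_inv_esymmGen (hs : 0 ≤ s) (hq : esymmGen r s ≠ 0) :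
    (1 + s : ℂ)⁻¹ - (esymmGen r s)⁻¹ = s ^ 2 * (r s / ((1 + s) * esymmGen r s)) := by
  rw [inv_sub_inv (one_add_ofReal_ne_zero hs) hq, mul_div_assoc']
  simp only [esymmGen]
  ring

theorem im_inv_one_add_sub_inv_esymmGen_pos (hr : ∀ x, 0 < x → 0 < (r x).im) (hs : 0 < s) :
    0 < ((1 + s : ℂ)⁻¹ - (esymmGen r s)⁻¹).im := by
  have hreal : ((1 + s : ℂ)⁻¹).im = 0 := by
    exact_mod_cast Complex.ofReal_im (1 + s)⁻¹
  rw [Complex.sub_im, hreal, zero_sub, Complex.inv_im, neg_div, neg_neg, im_esymmGen]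
  exact div_pos (mul_pos (pow_pos hs 2) (hr s hs))
    (Complex.normSq_pos.2 (esymmGen_ne_zero hr hs.le))

theorem integrableOn_inv_one_add_sub_inv_esymmGen_comp_inv (hrc : ContinuousOn r (Ici 0))
    (hr : ∀ x, 0 < x → 0 < (r x).im)
    (hbdd : (fun x ↦ (esymmGen r x)⁻¹) =O[atTop] fun _ ↦ (1 : ℝ)) :
    IntegrableOn (fun t : ℝ ↦ (1 + (t⁻¹ : ℝ) : ℂ)⁻¹ - (esymmGen r t⁻¹)⁻¹) (Ioi 0) := by
  have hqc : ContinuousOn (esymmGen r) (Ici 0) := by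
    unfold esymmGen
    fun_prop
  have hg : ContinuousOn (fun x : ℝ ↦ r x / ((1 + x) * esymmGen r x)) (Ici 0) :=
    hrc.div (by fun_prop) fun x hx ↦
      mul_ne_zero (one_add_ofReal_ne_zero hx) (esymmGen_ne_zero hr hx)
  have hfactor : ∀ x : ℝ, 0 ≤ x → x ^ 2 • (r x / ((1 + x) * esymmGen r x))
      = (1 + x : ℂ)⁻¹ - (esymmGen r x)⁻¹ := fun x hx ↦ by
    rw [inv_one_add_sub_inv_esymmGen hx (esymmGen_ne_zero hr hx), Complex.real_smul,
      Complex.ofReal_pow]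
  have hone : (fun x : ℝ ↦ (1 + x : ℂ)⁻¹) =O[atTop] fun _ ↦ (1 : ℝ) := by
    refine IsBigO.of_bound 1 ?_
    filter_upwards [eventually_ge_atTop 0] with x hx
    simpa only [norm_one, mul_one] using norm_inv_one_add_ofReal_le_one hx
  refine (integrableOn_Ioi_sq_smul_comp_inv hg ?_).congr_fun
    (fun t ht ↦ hfactor t⁻¹ (inv_nonneg.2 (le_of_lt ht))) measurableSet_Ioi
  refine (hone.sub hbdd).congr' ?_ .rfl
  filter_upwards [eventually_ge_atTop 0] with x hx
  exact (hfactor x hx).symm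

theorem im_integral_inv_one_add_sub_inv_esymmGen_comp_inv_pos (hrc : ContinuousOn r (Ici 0))
    (hr : ∀ x, 0 < x → 0 < (r x).im)
    (hbdd : (fun x ↦ (esymmGen r x)⁻¹) =O[atTop] fun _ ↦ (1 : ℝ)) :
    0 < (∫ t in Ioi (0 : ℝ), ((1 + (t⁻¹ : ℝ) : ℂ)⁻¹ - (esymmGen r t⁻¹)⁻¹)).im :=
  im_setIntegral_pos measurableSet_Ioi (by simp)
    (integrableOn_inv_one_add_sub_inv_esymmGen_comp_inv hrc hr hbdd)
    fun _ ht ↦ im_inv_one_add_sub_inv_esymmGen_pos hr (inv_pos.2 ht)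

end GeneratingFunction

section PolynomialRemainder

open Asymptotics Filter Polynomial

theorem tendsto_esymmGen_eval_cobounded (p : ℂ[X]) :
    Tendsto (esymmGen fun x ↦ p.eval (x : ℂ)) atTop (Bornology.cobounded ℂ) := by
  have hdeg : 0 < (1 + X + X ^ 2 * p).degree := by
    have hcoeff : (1 + X + X ^ 2 * p).coeff 1 = 1 := by
      simp [coeff_X_pow_mul', coeff_one]
    exact natDegree_pos_iff_degree_pos.1
      (le_natDegree_of_ne_zero (n := 1) (by simp [hcoeff]))
  have hnorm : Tendsto (fun s : ℝ ↦ ‖(s : ℂ)‖) atTop atTop := by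
    simpa only [Complex.norm_real] using! tendsto_norm_atTop_atTop
  refine tendsto_norm_atTop_iff_cobounded.1
    (((1 + X + X ^ 2 * p).tendsto_norm_atTop hdeg hnorm).congr fun s ↦ ?_)
  simp only [esymmGen, eval_add, eval_one, eval_X, eval_mul, eval_pow]

/-- The quadratic remainder `r(s) = e₂ + e₃ s + ⋯ + e_d s^(d-2)` of `∑ⱼ eⱼ sʲ`. -/
noncomputable def esymmTail (d : ℕ) (e : ℕ → ℂ) : ℂ[X] :=
  ∑ j ∈ Finset.Icc 2 d, C (e j) * X ^ (j - 2)

variable {d : ℕ} {e : ℕ → ℂ}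

theorem im_eval_esymmTail_pos (he : ∀ j ∈ Finset.Icc 2 d, 0 ≤ (e j).im)
    (hpos : ∃ k ∈ Finset.Icc 2 d, 0 < (e k).im) {s : ℝ} (hs : 0 < s) :
    0 < ((esymmTail d e).eval (s : ℂ)).im := by
  have him : ((esymmTail d e).eval (s : ℂ)).im
      = ∑ j ∈ Finset.Icc 2 d, (e j).im * s ^ (j - 2) := by
    simp [esymmTail, eval_finsetSum, ← Complex.ofReal_pow]
  obtain ⟨k, hk, hek⟩ := hpos
  rw [him]
  exact Finset.sum_pos' (fun j hj ↦ mul_nonneg (he j hj) (by positivity))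
    ⟨k, hk, mul_pos hek (by positivity)⟩

theorem pow_mul_esymmGen_esymmTail_inv (hd : 1 ≤ d) {t : ℝ} (ht : t ≠ 0) :
    (t : ℂ) ^ d * esymmGen (fun x ↦ (esymmTail d e).eval (x : ℂ)) t⁻¹
      = t ^ d + t ^ (d - 1) + ∑ j ∈ Finset.Icc 2 d, e j * t ^ (d - j) := by
  have ht' : (t : ℂ) ≠ 0 := Complex.ofReal_ne_zero.2 ht
  have hsub : ∀ j ≤ d, (t : ℂ) ^ (d - j) = t ^ d * (t : ℂ)⁻¹ ^ j := fun j hj ↦ by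
    rw [pow_sub₀ _ ht' hj, inv_pow]
  simp only [esymmGen, esymmTail, eval_finsetSum, eval_mul, eval_C, eval_pow, eval_X,
    Complex.ofReal_inv, mul_add, mul_one, Finset.mul_sum]
  rw [hsub 1 hd, pow_one]
  congr 1
  refine Finset.sum_congr rfl fun j hj ↦ ?_
  obtain ⟨h2j, hjd⟩ := Finset.mem_Icc.1 hj
  rw [hsub j hjd, ← pow_sub_mul_pow _ h2j]
  ring

end PolynomialRemainder

theorem sum_update_mul {ι R : Type*} [DecidableEq ι] [NonUnitalNonAssocSemiring R] {S : Finset ι}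
    {k : ι} (hk : k ∈ S) (f g : ι → R) (z : R) :
    ∑ j ∈ S, Function.update f k z j * g j = (∑ j ∈ S.erase k, f j * g j) + z * g k := by
  rw [← Finset.sum_erase_add _ _ hk, Function.update_self]
  congr 1
  exact Finset.sum_congr rfl fun j hj ↦ by rw [Function.update_of_ne (Finset.ne_of_mem_erase hj)]

theorem subentropy_pick_function_general (d : ℕ) (e : ℕ → ℂ)
    (he : ∀ j ∈ Finset.Icc 2 d, 0 ≤ (e j).im) (hpos : ∃ k ∈ Finset.Icc 2 d, 0 < (e k).im) :
    0 < (∫ τ in Set.Ioi (0 : ℝ),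
        ((1 : ℂ) - (τ : ℂ) ^ d / ((τ : ℂ) ^ d + (τ : ℂ) ^ (d - 1)
            + ∑ j ∈ Finset.Icc 2 d, e j * (τ : ℂ) ^ (d - j))
          - 1 / ((τ : ℂ) + 1))).im := by
  have hd : 1 ≤ d := by
    obtain ⟨k, hk, -⟩ := hpos
    have := Finset.mem_Icc.1 hk
    omega
  have him_pos := im_integral_inv_one_add_sub_inv_esymmGen_comp_inv_pos
    (r := fun x ↦ (esymmTail d e).eval (x : ℂ)) (by fun_prop)
    (fun x ↦ im_eval_esymmTail_pos he hpos)
    ((Filter.tendsto_inv₀_cobounded.comp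
      (tendsto_esymmGen_eval_cobounded (esymmTail d e))).isBigO_one ℝ)
  refine him_pos.trans_eq (congrArg Complex.im (setIntegral_congr_fun measurableSet_Ioi ?_))
  intro t (ht : 0 < t)
  have ht' : (t : ℂ) ≠ 0 := Complex.ofReal_ne_zero.2 ht.ne'
  have ht1 : (t : ℂ) + 1 ≠ 0 := add_comm (1 : ℂ) t ▸ one_add_ofReal_ne_zero ht.le
  simp only [← pow_mul_esymmGen_esymmTail_inv hd ht.ne',
    div_mul_cancel_left₀ (pow_ne_zero d ht'), Complex.ofReal_inv, inv_one_add_inv ht' ht1]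
  ring

/-- **The subentropy is a Pick function of each symmetric-polynomial variable.**
For `d ≥ 2`, `2 ≤ k ≤ d`, fixed positive `e_j` (`j ∈ {2,…,d}`, `j ≠ k`), and
`z ∈ ℂ` with `Im z > 0`, the analytic continuation
`Ψ(z) = ∫₀^∞ [1 − τ^d/(τ^d + τ^{d−1} + Σ_{j≠k} e_j τ^{d−j} + z τ^{d−k})
  − 1/(τ+1)] dτ` satisfies `Im Ψ(z) > 0`. -/
theorem subentropy_pick_function (d k : ℕ) (hd : 2 ≤ d) (hk2 : 2 ≤ k) (hkd : k ≤ d)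
    (e : ℕ → ℝ) (he : ∀ j ∈ (Finset.Icc 2 d).erase k, 0 < e j)
    (z : ℂ) (hz : 0 < z.im) :
    0 < (∫ τ in Set.Ioi (0 : ℝ),
        ((1 : ℂ) - (τ : ℂ) ^ d / ((τ : ℂ) ^ d + (τ : ℂ) ^ (d - 1)
            + (∑ j ∈ (Finset.Icc 2 d).erase k, (e j : ℂ) * (τ : ℂ) ^ (d - j))
            + z * (τ : ℂ) ^ (d - k))
          - 1 / ((τ : ℂ) + 1))).im := by
  simpa only [sum_update_mul (Finset.mem_Icc.2 ⟨hk2, hkd⟩), ← add_assoc] using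
    subentropy_pick_function_general d (Function.update (fun j ↦ (e j : ℂ)) k z)
      (fun j _ ↦ (Function.forall_update_iff _ fun _ (w : ℂ) ↦ 0 ≤ w.im).2 ⟨hz.le, by simp⟩ j)
      ⟨k, Finset.mem_Icc.2 ⟨hk2, hkd⟩, by simpa using hz⟩
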